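/- Let μ_r be a simple eigenvalue of Σ, let Σ̃ = Σ + E with E self-adjoint and ‖E‖ ≤ g_r/4, and let u ∈ ℍ. Then there is an absolute constant C > 0 such that |σ_r²(Σ̃; u) − σ_r²(Σ; u)| ≤ C (‖Σ‖²/g_r²)(‖E‖/g_r) ‖u‖². Moreover, if σ_r(Σ; u) > 0, then |σ_r(Σ̃; u)/σ_r(Σ; u) − 1| ≤ C' σ_r^{−2}(Σ; u)(‖Σ‖²/g_r²)(‖E‖/g_r) ‖u‖² for an absolute constant C' > 0. -/

import Mathlib

open MeasureTheory ProbabilityTheory Filter Set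
open scoped RealInnerProductSpace Topology NNReal ENNReal

noncomputable section

namespace KLN

variable {H : Type*} [NormedAddCommGroup H] [InnerProductSpace ℝ H] [CompleteSpace H]

/-- Rank-one operator `x ⊗ y : w ↦ ⟪y, w⟫ • x`. -/
def outer (x y : H) : H →L[ℝ] H := (innerSL ℝ y).smulRight x

/-- Sample covariance of the sample `X`. -/
def sampleCov {n : ℕ} (X : Fin n → H) : H →L[ℝ] H :=
  (n : ℝ)⁻¹ • ∑ j : Fin n, outer (X j) (X j)

/-- Courant–Fischer: `lam A j` is the `(j+1)`-th largest eigenvalue of the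
positive self-adjoint compact operator `A` (eigenvalues repeated with multiplicity). -/
def lam (A : H →L[ℝ] H) (j : ℕ) : ℝ :=
  ⨆ V : {V : Submodule ℝ H // Module.finrank ℝ V = j + 1},
    ⨅ x : {x : H // x ∈ V.1 ∧ ‖x‖ = 1}, ⟪A x.1, x.1⟫

/-- `λ_δ(A) := max {λ ∈ A : (λ-δ, λ) ∩ A = ∅}`. -/
def lamDelta (δ : ℝ) (A : Set ℝ) : ℝ := sSup {l | l ∈ A ∧ Ioo (l - δ) l ∩ A = ∅}

/-- Top δ-cluster `T_δ(A) := A \ [0, λ_δ(A))`. -/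
def topCluster (δ : ℝ) (A : Set ℝ) : Set ℝ := A \ Ico 0 (lamDelta δ A)

/-- Successive residual sets after removing top clusters. -/
def resid (δ : ℝ) (A : Set ℝ) : ℕ → Set ℝ
  | 0 => A
  | k + 1 => resid δ A k \ topCluster δ (resid δ A k)

/-- `cluster δ A k` is the `(k+1)`-th δ-cluster `A_{k+1}` of `A`. -/
def cluster (δ : ℝ) (A : Set ℝ) (k : ℕ) : Set ℝ := topCluster δ (resid δ A k)

/-- The number of δ-clusters: `ν := min {j : A_{j+1} = ∅}`. -/
def nClusters (δ : ℝ) (A : Set ℝ) : ℕ := sInf {j | cluster δ A j = ∅}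

/-- `σ(A) ∪ {0}`. -/
def spec0 (A : H →L[ℝ] H) : Set ℝ := spectrum ℝ A ∪ {0}

/-- Direct sum of the eigenspaces of `A` for eigenvalues in `c`. -/
def clusterSpace (A : H →L[ℝ] H) (c : Set ℝ) : Submodule ℝ H :=
  ⨆ t ∈ c, Module.End.eigenspace (A : H →ₗ[ℝ] H) t

/-- `A` is self-adjoint, positive and nuclear (trace class). -/
def IsPosNuclear (A : H →L[ℝ] H) : Prop :=
  (∀ x y : H, ⟪A x, y⟫ = ⟪x, A y⟫) ∧ (∀ x : H, 0 ≤ ⟪A x, x⟫) ∧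
    ∃ (ι : Type) (e : HilbertBasis ι ℝ H), Summable fun i => ⟪A (e i), e i⟫

/-- Nuclear norm of a self-adjoint `A`: `‖A‖₁ = ∑_j √(λ_j(A∘A))`. -/
def nuclearNormSA (A : H →L[ℝ] H) : ℝ := ∑' j, Real.sqrt (lam (A.comp A) j)

/-- A covariance operator together with its spectral decomposition
`Σ = ∑_s μ_s P_s` where `μ 0 > μ 1 > ⋯ > 0` are the distinct eigenvalues (0-indexed;
zero projections `P s = 0` are allowed so that finite rank operators are covered)
and `P s` are the (finite rank, mutually orthogonal) spectral projections. -/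
structure CovOp (H : Type*) [NormedAddCommGroup H] [InnerProductSpace ℝ H]
    [CompleteSpace H] where
  toCLM : H →L[ℝ] H
  μ : ℕ → ℝ
  P : ℕ → H →L[ℝ] H
  μ_pos : ∀ s, 0 < μ s
  μ_anti : StrictAnti μ
  μ_lim : Tendsto μ atTop (nhds 0)
  P_symm : ∀ s (x y : H), ⟪P s x, y⟫ = ⟪x, P s y⟫
  P_idem : ∀ s (x : H), P s (P s x) = P s x
  P_orth : ∀ s t, s ≠ t → ∀ x : H, P s (P t x) = 0
  P_finrank : ∀ s, FiniteDimensional ℝ (LinearMap.range (P s).toLinearMap)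
  μm_summable : Summable fun s =>
    μ s * (Module.finrank ℝ (LinearMap.range (P s).toLinearMap) : ℝ)
  decomp : ∀ x : H, HasSum (fun s => μ s • P s x) (toCLM x)

namespace CovOp

/-- multiplicity `m_s` of `μ s`. -/
def m (S : CovOp H) (s : ℕ) : ℕ :=
  Module.finrank ℝ (LinearMap.range (S.P s).toLinearMap)

/-- `tr(Σ) = ∑_s μ_s m_s`. -/
def trace (S : CovOp H) : ℝ := ∑' s, S.μ s * (S.m s : ℝ)

/-- effective rank `r(Σ) = tr(Σ)/‖Σ‖`. -/
def effRank (S : CovOp H) : ℝ := S.trace / ‖S.toCLM‖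

/-- spectral gap `g_r = dist(μ_r, σ(Σ) \ {μ_r})`. -/
def g (S : CovOp H) (r : ℕ) : ℝ :=
  Metric.infDist (S.μ r) (spectrum ℝ S.toCLM \ {S.μ r})

/-- `ḡ_r = min_{s ≤ r} g_s`. -/
def gbar (S : CovOp H) (r : ℕ) : ℝ := ⨅ s : Fin (r + 1), S.g s

/-- `C_r x = ∑_{s ≠ r} (μ_r - μ_s)⁻¹ P_s x`. -/
def C (S : CovOp H) (r : ℕ) (x : H) : H :=
  ∑' s, (if s = r then 0 else (S.μ r - S.μ s)⁻¹) • S.P s x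

/-- `σ_r²(Σ; u) = μ_r ⟨Σ C_r u, C_r u⟩`. -/
def sigmaSq (S : CovOp H) (r : ℕ) (u : H) : ℝ :=
  S.μ r * ⟪S.toCLM (S.C r u), S.C r u⟫

/-- `Δ_r = {j : λ_j(Σ) = μ_r}` (eigenvalues `λ_j` with multiplicities, 0-indexed). -/
def Delta (S : CovOp H) (r : ℕ) : Set ℕ := {j | lam S.toCLM j = S.μ r}

/-- `μ r` is a simple eigenvalue with (unit) eigenvector `θ`, i.e. `P r = θ ⊗ θ`. -/
def SimpleVec (S : CovOp H) (r : ℕ) (θ : H) : Prop :=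
  ‖θ‖ = 1 ∧ ∀ x : H, S.P r x = ⟪θ, x⟫ • θ

/-- `L_r(E) x = P_r E C_r x + C_r E P_r x`, with `P_r = θ ⊗ θ`. -/
def L (S : CovOp H) (r : ℕ) (θ : H) (E : H →L[ℝ] H) (x : H) : H :=
  ⟪θ, E (S.C r x)⟫ • θ + S.C r (E (⟪θ, x⟫ • θ))

/-- the class `𝒮^{(r)}(rk, a, s0, u)`. -/
def memS (S : CovOp H) (r : ℕ) (u : H) (rk a s0 : ℝ) : Prop :=
  S.effRank ≤ rk ∧ ‖S.toCLM‖ / S.gbar r ≤ a ∧ s0 ^ 2 ≤ S.sigmaSq r u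

/-- the open class `𝒮̊^{(r)}(rk, a, s0, u)`. -/
def memSo (S : CovOp H) (r : ℕ) (u : H) (rk a s0 : ℝ) : Prop :=
  S.effRank < rk ∧ ‖S.toCLM‖ / S.gbar r < a ∧ s0 ^ 2 < S.sigmaSq r u

/-- `A_r(Σ) = 2 ∑_{s ≠ r} μ_r μ_s m_s / (μ_r - μ_s)²`. -/
def Ar (S : CovOp H) (r : ℕ) : ℝ :=
  2 * ∑' s, (if s = r then 0 else S.μ r * S.μ s * (S.m s : ℝ) / (S.μ r - S.μ s) ^ 2)

end CovOp

/-- `ν` is a centered Gaussian measure on `H` with covariance operator `A`. -/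
def IsGaussian [MeasurableSpace H] (ν : Measure H) (A : H →L[ℝ] H) : Prop :=
  IsProbabilityMeasure ν ∧
    ∀ u : H, ν.map (fun x => ⟪x, u⟫) = gaussianReal 0 (Real.toNNReal ⟪A u, u⟫)

/-- standard normal distribution function. -/
def Phi (x : ℝ) : ℝ := ((gaussianReal 0 1) (Iic x)).toReal

/-- `E ℓ(Z)`, `Z` standard normal. -/
def stdGaussExp (f : ℝ → ℝ) : ℝ := ∫ z, f z ∂(gaussianReal 0 1)

/-- Assumption 3.1 on the loss function. -/
structure IsLoss (f : ℝ → ℝ) (c₁ c₂ : ℝ) : Prop where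
  c₁_pos : 0 < c₁
  c₂_pos : 0 < c₂
  nonneg : ∀ x, 0 ≤ f x
  zero : f 0 = 0
  even : ∀ x, f (-x) = f x
  mono : MonotoneOn f (Ici 0)
  conv : ConvexOn ℝ (Ici 0) f
  bound : ∀ x, 0 ≤ x → f x ≤ c₁ * Real.exp (c₂ * x)

/-- the bias parameter `b_r = E⟨θ̂_r, θ_r⟩² - 1` for an estimator `est` based on a
sample of `k` i.i.d. observations from `ν`. -/
def biasParam [MeasurableSpace H] {k : ℕ} (ν : Measure H) (θ : H)
    (est : (Fin k → H) → H) : ℝ :=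
  (∫ x, ⟪est x, θ⟫ ^ 2 ∂(Measure.pi fun _ : Fin k => ν)) - 1

/-- `est` is a valid selection of the estimator `θ̂_r^δ` with `δ = τ‖Σ̂‖`: a unit vector,
aligned with `θ`, lying in the direct sum of eigenspaces of `Σ̂` for eigenvalues in the
`r`-th `δ`-cluster of `σ(Σ̂)` (whenever that space is nontrivial). -/
def clusterSel (r : ℕ) (θ : H) (τ : ℝ) {k : ℕ} (est : (Fin k → H) → H) : Prop :=
  ∀ x : Fin k → H,
    ‖est x‖ = 1 ∧ 0 ≤ ⟪est x, θ⟫ ∧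
      (clusterSpace (sampleCov x) (cluster (τ * ‖sampleCov x‖) (spec0 (sampleCov x)) r) ≠ ⊥ →
        est x ∈ clusterSpace (sampleCov x) (cluster (τ * ‖sampleCov x‖) (spec0 (sampleCov x)) r))

/-- `est` is a valid selection of the empirical eigenvector `θ̂_r`: a unit vector, aligned
with `θ`, which is an eigenvector of `Σ̂` for an eigenvalue `λ_j(Σ̂)` with `j ∈ Δ_r`
(whenever such an eigenvector exists). -/
def eigSel (S : CovOp H) (r : ℕ) (θ : H) {k : ℕ} (est : (Fin k → H) → H) : Prop :=
  ∀ x : Fin k → H,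
    ‖est x‖ = 1 ∧ 0 ≤ ⟪est x, θ⟫ ∧
      ((∃ v : H, ‖v‖ = 1 ∧ ∃ j ∈ S.Delta r, sampleCov x v = lam (sampleCov x) j • v) →
        ∃ j ∈ S.Delta r, sampleCov x (est x) = lam (sampleCov x) j • est x)


/-!
Let `v` and `w` be the reduced resolvents of `Σ` and `Σ + E` at their eigenpairs `(μ, θ)` and
`(ρ, η)`, applied to `u`. Since `μ⟪Σv, v⟫ = ⟪μv - u, μv⟫`, and likewise for `w`, the difference of
the two variances factors as `⟪ρw - μv, ρw + μv - u⟫`. The second factor is `O(‖Σ‖/g) ‖u‖`, and the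
first is of order `‖E‖`: the eigenvector `η` is within `2‖E‖/g` of the line of `θ`, so `ρ - Σ - E`
is still bounded below by a multiple of `g` on `η^⊥`, and the resolvent equations give
`‖w - v‖ = O(‖E‖/g²) ‖u‖`.

The series `C_r` omits the kernel of `Σ`. Adding `μ_r⁻¹` times the kernel component of `u` makes
it the inverse of `μ_r - Σ` on `θ^⊥`, and leaves `σ_r²` unchanged.
-/

section UnitVectors

variable {F : Type*} [NormedAddCommGroup F] [InnerProductSpace ℝ F] {θ η : F}

theorem norm_sub_inner_smul_sq (hθ : ‖θ‖ = 1) (x : F) :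
    ‖x - ⟪θ, x⟫ • θ‖ ^ 2 = ‖x‖ ^ 2 - ⟪θ, x⟫ ^ 2 := by
  rw [norm_sub_sq_real, norm_smul, hθ, inner_smul_right, real_inner_comm, Real.norm_eq_abs,
    mul_one, sq_abs]
  ring

theorem norm_sub_inner_smul_le (hθ : ‖θ‖ = 1) (x : F) : ‖x - ⟪θ, x⟫ • θ‖ ≤ ‖x‖ := by
  refine le_of_sq_le_sq ?_ (norm_nonneg _)
  rw [norm_sub_inner_smul_sq hθ]
  exact sub_le_self _ (sq_nonneg _)

theorem inner_sub_inner_smul_eq_zero (hθ : ‖θ‖ = 1) (x : F) : ⟪θ, x - ⟪θ, x⟫ • θ⟫ = 0 := by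
  rw [inner_sub_right, inner_smul_right, real_inner_self_eq_norm_sq, hθ, one_pow, mul_one,
    sub_self]

theorem norm_sub_inner_smul_comm (hθ : ‖θ‖ = 1) (hη : ‖η‖ = 1) :
    ‖θ - ⟪η, θ⟫ • η‖ = ‖η - ⟪θ, η⟫ • θ‖ := by
  refine (sq_eq_sq₀ (norm_nonneg _) (norm_nonneg _)).1 ?_
  rw [norm_sub_inner_smul_sq hη, norm_sub_inner_smul_sq hθ, hθ, hη, real_inner_comm]

theorem abs_inner_le_of_inner_eq_zero (hθ : ‖θ‖ = 1) (hη : ‖η‖ = 1) {x : F} (hx : ⟪η, x⟫ = 0) :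
    |⟪θ, x⟫| ≤ ‖η - ⟪θ, η⟫ • θ‖ * ‖x‖ := by
  have h : ⟪θ, x⟫ = ⟪θ - ⟪η, θ⟫ • η, x⟫ := by
    rw [inner_sub_left, real_inner_smul_left, hx, mul_zero, sub_zero]
  rw [h, ← norm_sub_inner_smul_comm hθ hη]
  exact abs_real_inner_le_norm _ _

theorem abs_inner_mul_norm_le_of_inner_eq_zero (hθ : ‖θ‖ = 1) (hη : ‖η‖ = 1) {x : F}
    (hx : ⟪η, x⟫ = 0) : |⟪θ, η⟫| * ‖x‖ ≤ ‖x - ⟪θ, x⟫ • θ‖ := by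
  refine le_of_sq_le_sq ?_ (norm_nonneg _)
  have h : |⟪θ, x⟫| ^ 2 ≤ (‖η - ⟪θ, η⟫ • θ‖ * ‖x‖) ^ 2 := by
    gcongr
    exact abs_inner_le_of_inner_eq_zero hθ hη hx
  rw [sq_abs, mul_pow, norm_sub_inner_smul_sq hθ, hη] at h
  rw [mul_pow, sq_abs, norm_sub_inner_smul_sq hθ]
  linarith

theorem norm_inner_smul_sub_inner_smul_le (hθ : ‖θ‖ = 1) (hη : ‖η‖ = 1) (u : F) :
    ‖⟪θ, u⟫ • θ - ⟪η, u⟫ • η‖ ≤ 2 * ‖η - ⟪θ, η⟫ • θ‖ * ‖u‖ := by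
  -- `P_θ - P_η = P_θ (1 - P_η) - (1 - P_θ) P_η`
  have hsplit : ⟪θ, u⟫ • θ - ⟪η, u⟫ • η =
      ⟪θ - ⟪η, θ⟫ • η, u⟫ • θ - ⟪η, u⟫ • (η - ⟪θ, η⟫ • θ) := by
    rw [inner_sub_left, real_inner_smul_left, real_inner_comm θ η]
    module
  have hfst : ‖⟪θ - ⟪η, θ⟫ • η, u⟫ • θ‖ ≤ ‖η - ⟪θ, η⟫ • θ‖ * ‖u‖ := by
    rw [norm_smul, hθ, mul_one, ← norm_sub_inner_smul_comm hθ hη]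
    exact abs_real_inner_le_norm _ _
  have hsnd : ‖⟪η, u⟫ • (η - ⟪θ, η⟫ • θ)‖ ≤ ‖u‖ * ‖η - ⟪θ, η⟫ • θ‖ := by
    rw [norm_smul]
    gcongr
    simpa only [hη, one_mul] using norm_inner_le_norm (𝕜 := ℝ) η u
  rw [hsplit]
  linarith [norm_sub_le (⟪θ - ⟪η, θ⟫ • η, u⟫ • θ) (⟪η, u⟫ • (η - ⟪θ, η⟫ • θ))]

end UnitVectors

section Perturbation

variable {F : Type*} [NormedAddCommGroup F] [InnerProductSpace ℝ F]
  {A E : F →L[ℝ] F} {μ g ρ M : ℝ} {θ η u v w : F}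

/-- `μ - A` is bounded below by `g` on `θ^⊥`. For a self-adjoint `A` with simple eigenpair
`(μ, θ)` this says that `μ` is at distance at least `g` from the rest of the spectrum. -/
def HasGap (A : F →L[ℝ] F) (μ : ℝ) (θ : F) (g : ℝ) : Prop :=
  ∀ x, ⟪θ, x⟫ = 0 → g * ‖x‖ ≤ ‖μ • x - A x‖

/-- `(μ, θ)` is a unit eigenpair of the symmetric operator `A`, isolated by a gap `g > 0`. -/
structure IsIsolatedEigenpair (A : F →L[ℝ] F) (μ : ℝ) (θ : F) (g : ℝ) : Prop where
  isSymmetric : (A : F →ₗ[ℝ] F).IsSymmetric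
  norm_eq_one : ‖θ‖ = 1
  apply_eq : A θ = μ • θ
  gap_pos : 0 < g
  hasGap : HasGap A μ θ g

/-- `(ρ, η)` is a unit eigenpair of `A + E`, where both `ρ - μ` and the perturbation `E` are small
at the scale `g`. -/
structure IsPerturbedEigenpair (A E : F →L[ℝ] F) (μ g ρ : ℝ) (η : F) : Prop where
  norm_eq_one : ‖η‖ = 1
  apply_eq : (A + E) η = ρ • η
  abs_sub_le : |ρ - μ| ≤ g / 2
  norm_le : ‖E‖ ≤ g / 4

/-- `v` is the reduced resolvent of `A` at the eigenpair `(μ, θ)` applied to `u`: the solution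
in `θ^⊥` of `(μ - A) v = (1 - θ ⊗ θ) u`. -/
structure IsReducedResolvent (A : F →L[ℝ] F) (μ : ℝ) (θ u v : F) : Prop where
  inner_eq_zero : ⟪θ, v⟫ = 0
  sub_eq : μ • v - A v = u - ⟪θ, u⟫ • θ

theorem IsReducedResolvent.norm_le (hv : IsReducedResolvent A μ θ u v) (hθ : ‖θ‖ = 1)
    (hgap : HasGap A μ θ g) : g * ‖v‖ ≤ ‖u‖ :=
  calc g * ‖v‖ ≤ ‖μ • v - A v‖ := hgap v hv.inner_eq_zero
    _ = ‖u - ⟪θ, u⟫ • θ‖ := by rw [hv.sub_eq]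
    _ ≤ ‖u‖ := norm_sub_inner_smul_le hθ u

theorem IsReducedResolvent.mul_inner_apply_self (hv : IsReducedResolvent A μ θ u v) :
    μ * ⟪A v, v⟫ = ⟪μ • v - u, μ • v⟫ := by
  have hAv : A v = μ • v - u + ⟪θ, u⟫ • θ := by rw [← sub_sub_cancel (μ • v) (A v), hv.sub_eq]; abel
  rw [hAv, inner_add_left, real_inner_smul_left, hv.inner_eq_zero, mul_zero, add_zero,
    real_inner_smul_right]

namespace IsIsolatedEigenpair

theorem inner_apply (h : IsIsolatedEigenpair A μ θ g) (x : F) : ⟪θ, A x⟫ = μ * ⟪θ, x⟫ := by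
  rw [← real_inner_smul_left, ← h.apply_eq]
  exact (h.isSymmetric θ x).symm

theorem smul_sub_apply_sub_inner_smul (h : IsIsolatedEigenpair A μ θ g) (ρ : ℝ) (x : F) :
    ρ • (x - ⟪θ, x⟫ • θ) - A (x - ⟪θ, x⟫ • θ) =
      (ρ • x - A x) - ⟪θ, ρ • x - A x⟫ • θ := by
  rw [map_sub, map_smul, h.apply_eq, inner_sub_right, real_inner_smul_right, h.inner_apply]
  module

theorem gap_mul_norm_sub_inner_smul_le (h : IsIsolatedEigenpair A μ θ g) (x : F) :
    g * ‖x - ⟪θ, x⟫ • θ‖ ≤ ‖μ • x - A x‖ :=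
  calc g * ‖x - ⟪θ, x⟫ • θ‖
      ≤ ‖μ • (x - ⟪θ, x⟫ • θ) - A (x - ⟪θ, x⟫ • θ)‖ :=
        h.hasGap _ (inner_sub_inner_smul_eq_zero h.norm_eq_one x)
    _ ≤ ‖μ • x - A x‖ := by
        rw [h.smul_sub_apply_sub_inner_smul]
        exact norm_sub_inner_smul_le h.norm_eq_one _

theorem gap_mul_norm_le (h : IsIsolatedEigenpair A μ θ g) (x : F) :
    g * ‖x‖ ≤ ‖μ • x - A x‖ + g * |⟪θ, x⟫| := by
  have hx : ‖x‖ ≤ ‖x - ⟪θ, x⟫ • θ‖ + |⟪θ, x⟫| := by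
    simpa only [sub_add_cancel, norm_smul, h.norm_eq_one, mul_one, Real.norm_eq_abs] using
      norm_add_le (x - ⟪θ, x⟫ • θ) (⟪θ, x⟫ • θ)
  calc g * ‖x‖ ≤ g * (‖x - ⟪θ, x⟫ • θ‖ + |⟪θ, x⟫|) :=
        mul_le_mul_of_nonneg_left hx h.gap_pos.le
    _ ≤ ‖μ • x - A x‖ + g * |⟪θ, x⟫| := by
        rw [mul_add]
        gcongr
        exact h.gap_mul_norm_sub_inner_smul_le x

end IsIsolatedEigenpair

namespace IsPerturbedEigenpair

theorem norm_apply_le (hp : IsPerturbedEigenpair A E μ g ρ η) : ‖E η‖ ≤ ‖E‖ := by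
  simpa only [hp.norm_eq_one, mul_one] using E.le_opNorm η

theorem smul_sub_apply (hp : IsPerturbedEigenpair A E μ g ρ η) : ρ • η - A η = E η := by
  rw [← hp.apply_eq, add_apply, add_sub_cancel_left]

theorem gap_mul_norm_sub_inner_smul_le (hp : IsPerturbedEigenpair A E μ g ρ η)
    (h : IsIsolatedEigenpair A μ θ g) : g * ‖η - ⟪θ, η⟫ • θ‖ ≤ 2 * ‖E‖ := by
  set q := η - ⟪θ, η⟫ • θ
  have hres : ‖ρ • q - A q‖ ≤ ‖E‖ := by
    rw [h.smul_sub_apply_sub_inner_smul, hp.smul_sub_apply]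
    exact (norm_sub_inner_smul_le h.norm_eq_one _).trans hp.norm_apply_le
  have hshift : ‖(ρ - μ) • q‖ ≤ g / 2 * ‖q‖ := by
    rw [norm_smul]
    exact mul_le_mul_of_nonneg_right hp.abs_sub_le (norm_nonneg q)
  have hgap : g * ‖q‖ ≤ ‖μ • q - A q‖ :=
    h.hasGap q (inner_sub_inner_smul_eq_zero h.norm_eq_one η)
  have hsplit : μ • q - A q = (ρ • q - A q) - (ρ - μ) • q := by module
  rw [hsplit] at hgap
  linarith [norm_sub_le (ρ • q - A q) ((ρ - μ) • q)]

theorem four_fifths_le_abs_inner (hp : IsPerturbedEigenpair A E μ g ρ η)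
    (h : IsIsolatedEigenpair A μ θ g) : 4 / 5 ≤ |⟪θ, η⟫| := by
  have hq : ‖η - ⟪θ, η⟫ • θ‖ ≤ 1 / 2 := by
    refine le_of_mul_le_mul_left ?_ h.gap_pos
    linarith [hp.gap_mul_norm_sub_inner_smul_le h, hp.norm_le]
  have hq_sq : ‖η - ⟪θ, η⟫ • θ‖ ^ 2 ≤ (1 / 2) ^ 2 := by gcongr
  rw [norm_sub_inner_smul_sq h.norm_eq_one, hp.norm_eq_one] at hq_sq
  refine le_of_sq_le_sq ?_ (abs_nonneg _)
  rw [sq_abs]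
  linarith

theorem abs_sub_le_norm (hp : IsPerturbedEigenpair A E μ g ρ η)
    (h : IsIsolatedEigenpair A μ θ g) : |ρ - μ| ≤ 5 / 4 * ‖E‖ := by
  have hinner : ⟪θ, E η⟫ = (ρ - μ) * ⟪θ, η⟫ := by
    rw [← hp.smul_sub_apply, inner_sub_right, real_inner_smul_right, h.inner_apply, sub_mul]
  have hle : |ρ - μ| * |⟪θ, η⟫| ≤ ‖E‖ := by
    rw [← abs_mul, ← hinner]
    refine (abs_real_inner_le_norm _ _).trans ?_
    rw [h.norm_eq_one, one_mul]
    exact hp.norm_apply_le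
  have hcos := mul_le_mul_of_nonneg_left (hp.four_fifths_le_abs_inner h) (abs_nonneg (ρ - μ))
  linarith

theorem norm_smul_add_apply_le (hp : IsPerturbedEigenpair A E μ g ρ η)
    (h : IsIsolatedEigenpair A μ θ g) (x : F) : ‖(μ - ρ) • x + E x‖ ≤ 9 / 4 * ‖E‖ * ‖x‖ :=
  calc ‖(μ - ρ) • x + E x‖ ≤ |ρ - μ| * ‖x‖ + ‖E‖ * ‖x‖ := by
        rw [abs_sub_comm, ← Real.norm_eq_abs, ← norm_smul]
        exact (norm_add_le _ _).trans (by gcongr; exact E.le_opNorm x)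
    _ ≤ 5 / 4 * ‖E‖ * ‖x‖ + ‖E‖ * ‖x‖ := by gcongr; exact hp.abs_sub_le_norm h
    _ = 9 / 4 * ‖E‖ * ‖x‖ := by ring

theorem hasGap (hp : IsPerturbedEigenpair A E μ g ρ η) (h : IsIsolatedEigenpair A μ θ g) :
    HasGap (A + E) ρ η (g / 5) := by
  intro x hx
  have hcos : 4 / 5 * ‖x‖ ≤ ‖x - ⟪θ, x⟫ • θ‖ :=
    (mul_le_mul_of_nonneg_right (hp.four_fifths_le_abs_inner h) (norm_nonneg x)).trans
      (abs_inner_mul_norm_le_of_inner_eq_zero h.norm_eq_one hp.norm_eq_one hx)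
  have hunpert : 4 / 5 * g * ‖x‖ ≤ ‖μ • x - A x‖ := by
    have := mul_le_mul_of_nonneg_left hcos h.gap_pos.le
    linarith [h.gap_mul_norm_sub_inner_smul_le x]
  have hsplit : μ • x - A x = (ρ • x - (A + E) x) + ((μ - ρ) • x + E x) := by
    rw [add_apply]
    module
  have hpert : 9 / 4 * ‖E‖ * ‖x‖ ≤ 9 / 16 * g * ‖x‖ := by
    have := mul_le_mul_of_nonneg_right hp.norm_le (norm_nonneg x)
    linarith
  rw [hsplit] at hunpert
  have : 0 ≤ g * ‖x‖ := mul_nonneg h.gap_pos.le (norm_nonneg x)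
  linarith [norm_add_le (ρ • x - (A + E) x) ((μ - ρ) • x + E x), hp.norm_smul_add_apply_le h x]

theorem gap_mul_norm_reducedResolvent_le (hp : IsPerturbedEigenpair A E μ g ρ η)
    (h : IsIsolatedEigenpair A μ θ g) (hw : IsReducedResolvent (A + E) ρ η u w) :
    g * ‖w‖ ≤ 5 * ‖u‖ := by
  linarith [hw.norm_le hp.norm_eq_one (hp.hasGap h)]

theorem gap_sq_mul_norm_reducedResolvent_sub_le (hp : IsPerturbedEigenpair A E μ g ρ η)
    (h : IsIsolatedEigenpair A μ θ g) (hv : IsReducedResolvent A μ θ u v)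
    (hw : IsReducedResolvent (A + E) ρ η u w) : g ^ 2 * ‖w - v‖ ≤ 26 * ‖E‖ * ‖u‖ := by
  have hq := hp.gap_mul_norm_sub_inner_smul_le h
  have hw_norm := hp.gap_mul_norm_reducedResolvent_le h hw
  have hinner : g * |⟪θ, w - v⟫| ≤ 2 * ‖E‖ * ‖w‖ := by
    rw [inner_sub_right, hv.inner_eq_zero, sub_zero]
    have := mul_le_mul_of_nonneg_left
      (abs_inner_le_of_inner_eq_zero h.norm_eq_one hp.norm_eq_one hw.inner_eq_zero) h.gap_pos.le
    linarith [mul_le_mul_of_nonneg_right hq (norm_nonneg w)]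
  have hsplit : μ • (w - v) - A (w - v) =
      ((μ - ρ) • w + E w) + (⟪θ, u⟫ • θ - ⟪η, u⟫ • η) := by
    have hAw := hw.sub_eq
    rw [add_apply] at hAw
    rw [map_sub]
    linear_combination (norm := module) hAw - hv.sub_eq
  have hstep : g * ‖w - v‖ ≤
      17 / 4 * ‖E‖ * ‖w‖ + 2 * ‖η - ⟪θ, η⟫ • θ‖ * ‖u‖ := by
    have hgap := h.gap_mul_norm_le (w - v)
    rw [hsplit] at hgap
    linarith [norm_add_le ((μ - ρ) • w + E w) (⟪θ, u⟫ • θ - ⟪η, u⟫ • η),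
      hp.norm_smul_add_apply_le h w,
      norm_inner_smul_sub_inner_smul_le h.norm_eq_one hp.norm_eq_one u]
  calc g ^ 2 * ‖w - v‖ = g * (g * ‖w - v‖) := by ring
    _ ≤ g * (17 / 4 * ‖E‖ * ‖w‖ + 2 * ‖η - ⟪θ, η⟫ • θ‖ * ‖u‖) :=
        mul_le_mul_of_nonneg_left hstep h.gap_pos.le
    _ = 17 / 4 * ‖E‖ * (g * ‖w‖) + 2 * (g * ‖η - ⟪θ, η⟫ • θ‖) * ‖u‖ := by ring
    _ ≤ 17 / 4 * ‖E‖ * (5 * ‖u‖) + 2 * (2 * ‖E‖) * ‖u‖ := by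
        gcongr
    _ ≤ 26 * ‖E‖ * ‖u‖ := by
        have : 0 ≤ ‖E‖ * ‖u‖ := by positivity
        linarith

theorem gap_sq_mul_norm_smul_sub_smul_le (hp : IsPerturbedEigenpair A E μ g ρ η)
    (h : IsIsolatedEigenpair A μ θ g) (hv : IsReducedResolvent A μ θ u v)
    (hw : IsReducedResolvent (A + E) ρ η u w) (hμ : |μ| ≤ M) (hg : g ≤ 2 * M) :
    g ^ 2 * ‖ρ • w - μ • v‖ ≤ 39 * M * ‖E‖ * ‖u‖ := by
  have hg0 := h.gap_pos
  have hM : 0 ≤ M := (abs_nonneg μ).trans hμ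
  have hsub := hp.gap_sq_mul_norm_reducedResolvent_sub_le h hv hw
  have hρ := hp.abs_sub_le_norm h
  have hw_norm := hp.gap_mul_norm_reducedResolvent_le h hw
  have hsplit : ρ • w - μ • v = μ • (w - v) + (ρ - μ) • w := by module
  have hnorm : ‖ρ • w - μ • v‖ ≤ |μ| * ‖w - v‖ + |ρ - μ| * ‖w‖ := by
    rw [hsplit]
    exact (norm_add_le _ _).trans_eq (by rw [norm_smul, norm_smul, Real.norm_eq_abs,
      Real.norm_eq_abs])
  calc g ^ 2 * ‖ρ • w - μ • v‖
      ≤ g ^ 2 * (|μ| * ‖w - v‖ + |ρ - μ| * ‖w‖) := by gcongr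
    _ = |μ| * (g ^ 2 * ‖w - v‖) + |ρ - μ| * g * (g * ‖w‖) := by ring
    _ ≤ M * (26 * ‖E‖ * ‖u‖) + 5 / 4 * ‖E‖ * (2 * M) * (5 * ‖u‖) := by
        gcongr
    _ ≤ 39 * M * ‖E‖ * ‖u‖ := by
        have : 0 ≤ M * ‖E‖ * ‖u‖ := by positivity
        linarith

theorem gap_mul_norm_smul_add_smul_sub_le (hp : IsPerturbedEigenpair A E μ g ρ η)
    (h : IsIsolatedEigenpair A μ θ g) (hv : IsReducedResolvent A μ θ u v)
    (hw : IsReducedResolvent (A + E) ρ η u w) (hμ : |μ| ≤ M) (hg : g ≤ 2 * M) :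
    g * ‖ρ • w + μ • v - u‖ ≤ 13 * M * ‖u‖ := by
  have hg0 := h.gap_pos
  have hM : 0 ≤ M := (abs_nonneg μ).trans hμ
  have hv_norm := hv.norm_le h.norm_eq_one h.hasGap
  have hw_norm := hp.gap_mul_norm_reducedResolvent_le h hw
  have hρ : |ρ| ≤ 2 * M := by
    have := abs_add_le μ (ρ - μ)
    rw [add_sub_cancel] at this
    linarith [hp.abs_sub_le]
  have hnorm : ‖ρ • w + μ • v - u‖ ≤ |ρ| * ‖w‖ + |μ| * ‖v‖ + ‖u‖ := by
    simpa only [norm_smul, Real.norm_eq_abs] using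
      (norm_sub_le _ _).trans (add_le_add_left (norm_add_le (ρ • w) (μ • v)) ‖u‖)
  calc g * ‖ρ • w + μ • v - u‖ ≤ g * (|ρ| * ‖w‖ + |μ| * ‖v‖ + ‖u‖) := by gcongr
    _ = |ρ| * (g * ‖w‖) + |μ| * (g * ‖v‖) + g * ‖u‖ := by ring
    _ ≤ 2 * M * (5 * ‖u‖) + M * ‖u‖ + 2 * M * ‖u‖ := by
        gcongr
    _ = 13 * M * ‖u‖ := by ring

theorem abs_mul_inner_sub_mul_inner_le (hp : IsPerturbedEigenpair A E μ g ρ η)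
    (h : IsIsolatedEigenpair A μ θ g) (hv : IsReducedResolvent A μ θ u v)
    (hw : IsReducedResolvent (A + E) ρ η u w) (hμ : |μ| ≤ M) (hg : g ≤ 2 * M) :
    |ρ * ⟪(A + E) w, w⟫ - μ * ⟪A v, v⟫| ≤
      507 * (M ^ 2 / g ^ 2) * (‖E‖ / g) * ‖u‖ ^ 2 := by
  have hg0 := h.gap_pos
  have hM : 0 ≤ M := (abs_nonneg μ).trans hμ
  have hsub := hp.gap_sq_mul_norm_smul_sub_smul_le h hv hw hμ hg
  have hadd := hp.gap_mul_norm_smul_add_smul_sub_le h hv hw hμ hg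
  have hfactor : ρ * ⟪(A + E) w, w⟫ - μ * ⟪A v, v⟫ =
      ⟪ρ • w - μ • v, ρ • w + μ • v - u⟫ := by
    rw [hw.mul_inner_apply_self, hv.mul_inner_apply_self]
    simp only [inner_sub_left, inner_sub_right, inner_add_right,
      real_inner_comm u, real_inner_comm (μ • v) (ρ • w)]
    ring
  have hscaled : g ^ 3 * |ρ * ⟪(A + E) w, w⟫ - μ * ⟪A v, v⟫| ≤
      507 * M ^ 2 * ‖E‖ * ‖u‖ ^ 2 :=
    calc g ^ 3 * |ρ * ⟪(A + E) w, w⟫ - μ * ⟪A v, v⟫|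
        ≤ g ^ 3 * (‖ρ • w - μ • v‖ * ‖ρ • w + μ • v - u‖) := by
          rw [hfactor]
          gcongr
          exact abs_real_inner_le_norm _ _
      _ = (g ^ 2 * ‖ρ • w - μ • v‖) * (g * ‖ρ • w + μ • v - u‖) := by ring
      _ ≤ (39 * M * ‖E‖ * ‖u‖) * (13 * M * ‖u‖) := by
          gcongr
      _ = 507 * M ^ 2 * ‖E‖ * ‖u‖ ^ 2 := by ring
  calc |ρ * ⟪(A + E) w, w⟫ - μ * ⟪A v, v⟫|
      ≤ 507 * M ^ 2 * ‖E‖ * ‖u‖ ^ 2 / g ^ 3 := (le_div_iff₀' (by positivity)).2 hscaled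
    _ = 507 * (M ^ 2 / g ^ 2) * (‖E‖ / g) * ‖u‖ ^ 2 := by field_simp

end IsPerturbedEigenpair

end Perturbation

section Spectrum

variable {F : Type*} [NormedAddCommGroup F] [NormedSpace ℝ F]

theorem mem_spectrum_of_apply_eq_smul {A : F →L[ℝ] F} {x : F} (hx : x ≠ 0) {t : ℝ}
    (h : A x = t • x) : t ∈ spectrum ℝ A := by
  intro hunit
  have hinj : Function.Injective (algebraMap ℝ (F →L[ℝ] F) t - A) :=
    ((Module.End.isUnit_iff _).1 (hunit.map ContinuousLinearMap.toLinearMapRingHom)).injective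
  refine hx (hinj ?_)
  rw [map_zero, sub_apply, ContinuousLinearMap.algebraMap_apply, h, sub_self]

end Spectrum

theorem abs_sqrt_div_sqrt_sub_one_le (x : ℝ) {y : ℝ} (hy : 0 < y) :
    |√x / √y - 1| ≤ y⁻¹ * |x - y| := by
  have hsqrt (t : ℝ) : |√t - 1| ≤ |t - 1| := by
    rcases le_total 0 t with ht | ht
    · have hfactor : t - 1 = (√t - 1) * (√t + 1) := by linear_combination -Real.sq_sqrt ht
      rw [hfactor, abs_mul]
      refine le_mul_of_one_le_right (abs_nonneg _) ((le_abs_self _).trans' ?_)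
      linarith [Real.sqrt_nonneg t]
    · rw [Real.sqrt_eq_zero_of_nonpos ht, zero_sub, abs_neg, abs_one, abs_sub_comm]
      exact (le_abs_self _).trans' (by linarith)
  calc |√x / √y - 1| = |√(x / y) - 1| := by rw [Real.sqrt_div' x hy.le]
    _ ≤ |x / y - 1| := hsqrt (x / y)
    _ = y⁻¹ * |x - y| := by
      have hfactor : x / y - 1 = y⁻¹ * (x - y) := by field_simp
      rw [hfactor, abs_mul, abs_of_pos (inv_pos.2 hy)]

namespace CovOp

variable (S : CovOp H) {r s t : ℕ} {c d : ℕ → ℝ} {x y z θ : H}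

theorem inner_P_P_of_ne (h : s ≠ t) (x y : H) : ⟪S.P s x, S.P t y⟫ = 0 := by
  rw [S.P_symm, S.P_orth s t h, inner_zero_right]

theorem inner_P_self (s : ℕ) (x : H) : ⟪S.P s x, x⟫ = ‖S.P s x‖ ^ 2 := by
  rw [← real_inner_self_eq_norm_sq, ← S.P_symm, S.P_idem]

variable {S} in
theorem P_apply_of_hasSum (h : HasSum (fun s => c s • S.P s x) y) (s : ℕ) :
    S.P s y = c s • S.P s x := by
  refine (h.mapL (S.P s)).unique ?_
  convert hasSum_single s fun t ht => ?_ using 1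
  · rw [map_smul, S.P_idem]
  · rw [map_smul, S.P_orth s t ht.symm, smul_zero]

theorem toCLM_P (s : ℕ) (x : H) : S.toCLM (S.P s x) = S.μ s • S.P s x := by
  refine (S.decomp (S.P s x)).unique ?_
  convert hasSum_single s fun t ht => ?_ using 1
  · rw [S.P_idem]
  · rw [S.P_orth t s ht, smul_zero]

theorem isSymmetric : (S.toCLM : H →ₗ[ℝ] H).IsSymmetric := by
  intro x y
  have hx : HasSum (fun s => ⟪y, S.μ s • S.P s x⟫) ⟪y, S.toCLM x⟫ :=
    (S.decomp x).mapL (innerSL ℝ y)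
  have hy : HasSum (fun s => ⟪x, S.μ s • S.P s y⟫) ⟪x, S.toCLM y⟫ :=
    (S.decomp y).mapL (innerSL ℝ x)
  change ⟪S.toCLM x, y⟫ = ⟪x, S.toCLM y⟫
  rw [real_inner_comm]
  refine hx.unique ?_
  convert hy using 2 with s
  rw [real_inner_smul_right, real_inner_smul_right, ← S.P_symm, real_inner_comm]

theorem orthogonalFamily_range_P :
    OrthogonalFamily ℝ (fun s => LinearMap.range (S.P s).toLinearMap)
      fun s => (LinearMap.range (S.P s).toLinearMap).subtypeₗᵢ := by
  rintro s t hst ⟨_, ⟨x, rfl⟩⟩ ⟨_, ⟨y, rfl⟩⟩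
  exact S.inner_P_P_of_ne hst x y

theorem sum_norm_P_sq_le (x : H) (I : Finset ℕ) : ∑ s ∈ I, ‖S.P s x‖ ^ 2 ≤ ‖x‖ ^ 2 := by
  set p := ∑ s ∈ I, S.P s x
  have hnorm : ‖p‖ ^ 2 = ∑ s ∈ I, ‖S.P s x‖ ^ 2 :=
    S.orthogonalFamily_range_P.norm_sum (fun s => ⟨S.P s x, x, rfl⟩) I
  have hinner : ⟪p, x⟫ = ‖p‖ ^ 2 := by
    rw [hnorm, sum_inner]
    exact Finset.sum_congr rfl fun s _ => S.inner_P_self s x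
  have hdist : 0 ≤ ‖p - x‖ ^ 2 := sq_nonneg _
  rw [norm_sub_sq_real, hinner] at hdist
  linarith

theorem summable_smul_P {K : ℝ} (hc : ∀ s, S.P s x ≠ 0 → |c s| ≤ K) :
    Summable fun s => c s • S.P s x := by
  refine (S.orthogonalFamily_range_P.summable_iff_norm_sq_summable
    fun s => ⟨c s • S.P s x, c s • x, map_smul _ _ _⟩).2 ?_
  have hP : Summable fun s => ‖S.P s x‖ ^ 2 :=
    summable_of_sum_le (fun _ => sq_nonneg _) (S.sum_norm_P_sq_le x)
  refine (hP.mul_left (K ^ 2)).of_nonneg_of_le (fun _ => sq_nonneg _) fun s => ?_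
  rw [Submodule.coe_norm, norm_smul, mul_pow]
  by_cases hs : S.P s x = 0
  · simp [hs]
  · gcongr
    exact hc s hs

variable {S} in
theorem hasSum_sq_mul_norm_P_sq (h : HasSum (fun s => c s • S.P s x) y) :
    HasSum (fun s => c s ^ 2 * ‖S.P s x‖ ^ 2) (‖y‖ ^ 2) := by
  have hy : HasSum (fun s => ⟪y, c s • S.P s x⟫) ⟪y, y⟫ := h.mapL (innerSL ℝ y)
  rw [real_inner_self_eq_norm_sq] at hy
  convert hy using 2 with s
  rw [← P_apply_of_hasSum h, real_inner_comm, inner_P_self, P_apply_of_hasSum h, norm_smul,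
    mul_pow, Real.norm_eq_abs, sq_abs]

variable {S} in
theorem norm_le_norm_of_hasSum (hy : HasSum (fun s => c s • S.P s x) y)
    (hz : HasSum (fun s => d s • S.P s x) z) (hcd : ∀ s, S.P s x ≠ 0 → |c s| ≤ |d s|) :
    ‖y‖ ≤ ‖z‖ := by
  refine le_of_sq_le_sq ?_ (norm_nonneg z)
  refine hasSum_le (fun s => ?_) (hasSum_sq_mul_norm_P_sq hy) (hasSum_sq_mul_norm_P_sq hz)
  by_cases hs : S.P s x = 0
  · simp [hs]
  · have := sq_le_sq.2 (hcd s hs)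
    gcongr

/-- The component of `x` in the kernel of `Σ`, which the projections `P s` do not see. -/
def kerPart (x : H) : H := x - ∑' s, S.P s x

theorem hasSum_P (x : H) : HasSum (fun s => S.P s x) (x - S.kerPart x) := by
  have h : Summable fun s => (1 : ℝ) • S.P s x := S.summable_smul_P fun _ _ => abs_one.le
  simp only [one_smul] at h
  rw [kerPart, sub_sub_cancel]
  exact h.hasSum

theorem toCLM_kerPart (x : H) : S.toCLM (S.kerPart x) = 0 := by
  have h := (S.hasSum_P x).mapL S.toCLM
  simp only [toCLM_P] at h
  simpa only [map_sub, sub_eq_self] using h.unique (S.decomp x)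

theorem P_kerPart (s : ℕ) (x : H) : S.P s (S.kerPart x) = 0 := by
  have h : HasSum (fun s => (1 : ℝ) • S.P s x) (x - S.kerPart x) := by
    simpa only [one_smul] using S.hasSum_P x
  simpa only [map_sub, one_smul, sub_eq_self] using P_apply_of_hasSum h s

variable {S} in
theorem inner_kerPart_of_hasSum (h : HasSum (fun s => c s • S.P s x) y) (z : H) :
    ⟪S.kerPart z, y⟫ = 0 := by
  refine (h.mapL (innerSL ℝ (S.kerPart z))).unique ?_
  convert hasSum_zero with s
  rw [innerSL_apply_apply, real_inner_smul_right, ← S.P_symm, P_kerPart, inner_zero_left, mul_zero]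

theorem g_le_abs_μ_sub_of_apply_eq_smul (r : ℕ) (hx : x ≠ 0) {ρ : ℝ} (h : S.toCLM x = ρ • x)
    (hρ : ρ ≠ S.μ r) : S.g r ≤ |S.μ r - ρ| :=
  Metric.infDist_le_dist_of_mem ⟨mem_spectrum_of_apply_eq_smul hx h, hρ⟩

theorem g_le_abs_μ_sub_μ (hs : s ≠ r) (hx : S.P s x ≠ 0) : S.g r ≤ |S.μ r - S.μ s| :=
  S.g_le_abs_μ_sub_of_apply_eq_smul r hx (S.toCLM_P s x) (S.μ_anti.injective.ne hs)

theorem g_mul_norm_kerPart_le (r : ℕ) (x : H) :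
    S.g r * ‖S.kerPart x‖ ≤ S.μ r * ‖S.kerPart x‖ := by
  by_cases hk : S.kerPart x = 0
  · simp [hk]
  · gcongr
    have hzero : S.toCLM (S.kerPart x) = (0 : ℝ) • S.kerPart x := by
      rw [toCLM_kerPart, zero_smul]
    simpa only [sub_zero, abs_of_pos (S.μ_pos r)] using
      S.g_le_abs_μ_sub_of_apply_eq_smul r hk hzero (S.μ_pos r).ne

theorem g_mul_norm_le (hx : S.P r x = 0) : S.g r * ‖x‖ ≤ ‖S.μ r • x - S.toCLM x‖ := by
  set k := S.kerPart x
  have hg : 0 ≤ S.g r := Metric.infDist_nonneg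
  have hp : HasSum (fun s => S.g r • S.P s x) (S.g r • (x - k)) := (S.hasSum_P x).const_smul _
  have hz : HasSum (fun s => (S.μ r - S.μ s) • S.P s x) (S.μ r • (x - k) - S.toCLM x) := by
    simpa only [sub_smul] using ((S.hasSum_P x).const_smul (S.μ r)).sub (S.decomp x)
  have hrange : S.g r * ‖x - k‖ ≤ ‖S.μ r • (x - k) - S.toCLM x‖ := by
    rw [← abs_of_nonneg hg, ← Real.norm_eq_abs, ← norm_smul]
    refine norm_le_norm_of_hasSum hp hz fun s hs => ?_
    have hsr : s ≠ r := fun h => hs (h ▸ hx)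
    exact (abs_of_nonneg hg).trans_le (S.g_le_abs_μ_sub_μ hsr hs)
  have hker := S.g_mul_norm_kerPart_le r x
  have hx_sq : ‖x‖ ^ 2 = ‖k‖ ^ 2 + ‖x - k‖ ^ 2 := by
    have horth : ⟪k, x - k⟫ = 0 :=
      inner_kerPart_of_hasSum (c := fun _ => 1) (by simpa only [one_smul] using S.hasSum_P x) x
    nth_rewrite 1 [← add_sub_cancel k x]
    rw [norm_add_sq_real, horth, mul_zero, add_zero]
  have hres_sq : ‖S.μ r • x - S.toCLM x‖ ^ 2 =
      (S.μ r * ‖k‖) ^ 2 + ‖S.μ r • (x - k) - S.toCLM x‖ ^ 2 := by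
    have hsplit : S.μ r • x - S.toCLM x = S.μ r • k + (S.μ r • (x - k) - S.toCLM x) := by module
    rw [hsplit, norm_add_sq_real, real_inner_smul_left, inner_kerPart_of_hasSum hz, norm_smul,
      Real.norm_of_nonneg (S.μ_pos r).le, mul_zero, mul_zero, add_zero]
  refine le_of_sq_le_sq ?_ (norm_nonneg _)
  calc (S.g r * ‖x‖) ^ 2 = (S.g r * ‖k‖) ^ 2 + (S.g r * ‖x - k‖) ^ 2 := by
        rw [mul_pow, hx_sq]; ring
    _ ≤ (S.μ r * ‖k‖) ^ 2 + ‖S.μ r • (x - k) - S.toCLM x‖ ^ 2 := by gcongr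
    _ = ‖S.μ r • x - S.toCLM x‖ ^ 2 := hres_sq.symm

theorem hasSum_C (hg : 0 < S.g r) (u : H) :
    HasSum (fun s => (if s = r then 0 else (S.μ r - S.μ s)⁻¹) • S.P s u) (S.C r u) := by
  refine (S.summable_smul_P (K := (S.g r)⁻¹) fun s hs => ?_).hasSum
  split_ifs with hsr
  · simp [hg.le]
  · rw [abs_inv]
    gcongr
    exact S.g_le_abs_μ_sub_μ hsr hs

theorem smul_C_sub_toCLM_C (hg : 0 < S.g r) (u : H) :
    S.μ r • S.C r u - S.toCLM (S.C r u) = u - S.kerPart u - S.P r u := by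
  have hres := ((S.hasSum_C hg u).const_smul (S.μ r)).sub ((S.hasSum_C hg u).mapL S.toCLM)
  have hproj : HasSum (fun s => if s = r then S.P s u else 0) (S.P r u) := by
    simpa only [if_true] using
      hasSum_single (f := fun s => if s = r then S.P s u else 0) r fun t ht => if_neg ht
  refine hres.unique ?_
  convert (S.hasSum_P u).sub hproj using 2 with s
  rw [map_smul, toCLM_P]
  split_ifs with hsr
  · simp
  · have hne : S.μ r - S.μ s ≠ 0 := sub_ne_zero.2 (S.μ_anti.injective.ne (Ne.symm hsr))
    rw [smul_smul, smul_smul, ← sub_smul, sub_zero, mul_comm, ← mul_sub, inv_mul_cancel₀ hne,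
      one_smul]

/-- The reduced resolvent `∑_{s ≠ r} (μ_r - μ_s)⁻¹ P_s` taken over the whole spectrum of `Σ`: it
is `C_r` completed by the term of the eigenvalue `0`, on which `μ_r - Σ` acts as `μ_r`. -/
def reducedResolvent (r : ℕ) (u : H) : H := S.C r u + (S.μ r)⁻¹ • S.kerPart u

theorem sigmaSq_eq_mul_inner (r : ℕ) (u : H) : S.sigmaSq r u =
    S.μ r * ⟪S.toCLM (S.reducedResolvent r u), S.reducedResolvent r u⟫ := by
  have hker : ⟪S.toCLM (S.C r u), S.kerPart u⟫ = 0 :=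
    (S.isSymmetric (S.C r u) (S.kerPart u)).trans (by
      rw [ContinuousLinearMap.coe_coe, toCLM_kerPart, inner_zero_right])
  rw [sigmaSq, reducedResolvent, map_add, map_smul, toCLM_kerPart, smul_zero, add_zero,
    inner_add_right, real_inner_smul_right, hker, mul_zero, add_zero]

theorem P_reducedResolvent (hg : 0 < S.g r) (u : H) : S.P r (S.reducedResolvent r u) = 0 := by
  rw [reducedResolvent, map_add, map_smul, P_kerPart, P_apply_of_hasSum (S.hasSum_C hg u),
    if_pos rfl, zero_smul, smul_zero, add_zero]

theorem smul_reducedResolvent_sub (hg : 0 < S.g r) (u : H) :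
    S.μ r • S.reducedResolvent r u - S.toCLM (S.reducedResolvent r u) = u - S.P r u := by
  rw [reducedResolvent, map_add, map_smul, toCLM_kerPart, smul_zero, add_zero, smul_add,
    smul_inv_smul₀ (S.μ_pos r).ne', add_sub_right_comm, S.smul_C_sub_toCLM_C hg]
  abel

namespace SimpleVec

variable {S}

theorem P_eq_zero_iff (hθ : S.SimpleVec r θ) : S.P r x = 0 ↔ ⟪θ, x⟫ = 0 := by
  have hθ0 : θ ≠ 0 := norm_ne_zero_iff.1 (hθ.1.trans_ne one_ne_zero)
  rw [hθ.2, smul_eq_zero_iff_left hθ0]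

theorem toCLM_apply (hθ : S.SimpleVec r θ) : S.toCLM θ = S.μ r • θ := by
  have hP : S.P r θ = θ := by
    rw [hθ.2, real_inner_self_eq_norm_sq, hθ.1, one_pow, one_smul]
  rw [← hP, toCLM_P, hP]

theorem isIsolatedEigenpair (hθ : S.SimpleVec r θ) (hg : 0 < S.g r) :
    IsIsolatedEigenpair S.toCLM (S.μ r) θ (S.g r) where
  isSymmetric := S.isSymmetric
  norm_eq_one := hθ.1
  apply_eq := hθ.toCLM_apply
  gap_pos := hg
  hasGap _ hx := S.g_mul_norm_le (hθ.P_eq_zero_iff.2 hx)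

theorem isReducedResolvent (hθ : S.SimpleVec r θ) (hg : 0 < S.g r) (u : H) :
    IsReducedResolvent S.toCLM (S.μ r) θ u (S.reducedResolvent r u) where
  inner_eq_zero := hθ.P_eq_zero_iff.1 (S.P_reducedResolvent hg u)
  sub_eq := by rw [S.smul_reducedResolvent_sub hg, hθ.2]

theorem abs_μ_le_norm (hθ : S.SimpleVec r θ) : |S.μ r| ≤ ‖S.toCLM‖ := by
  simpa only [hθ.toCLM_apply, norm_smul, hθ.1, mul_one, Real.norm_eq_abs] using
    S.toCLM.le_opNorm θ

theorem g_le_two_mul_norm (hθ : S.SimpleVec r θ) : S.g r ≤ 2 * ‖S.toCLM‖ := by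
  rcases (spectrum ℝ S.toCLM \ {S.μ r}).eq_empty_or_nonempty with hempty | ⟨t, ht⟩
  · rw [g, hempty, Metric.infDist_empty]
    positivity
  · have : Nontrivial H := ⟨θ, 0, norm_ne_zero_iff.1 (hθ.1.trans_ne one_ne_zero)⟩
    calc S.g r ≤ |S.μ r - t| := Metric.infDist_le_dist_of_mem ht
      _ ≤ |S.μ r| + |t| := abs_sub _ _
      _ ≤ ‖S.toCLM‖ + ‖S.toCLM‖ :=
          add_le_add hθ.abs_μ_le_norm (spectrum.norm_le_norm_of_mem ht.1)
      _ = 2 * ‖S.toCLM‖ := (two_mul _).symm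

end SimpleVec

end CovOp

theorem stmt18_general {S : CovOp H} {r : ℕ} {θ θt u w : H} {E : H →L[ℝ] H} {ρt : ℝ}
    (hθ : S.SimpleVec r θ) (hE : ‖E‖ ≤ S.g r / 4) (hθt : ‖θt‖ = 1)
    (heig : (S.toCLM + E) θt = ρt • θt)
    (hρt : ρt ∈ Ioo (S.μ r - S.g r / 2) (S.μ r + S.g r / 2)) (horth : ⟪w, θt⟫ = 0)
    (hw : ρt • w - (S.toCLM + E) w = u - ⟪θt, u⟫ • θt) :
    |ρt * ⟪(S.toCLM + E) w, w⟫ - S.sigmaSq r u| ≤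
        507 * (‖S.toCLM‖ ^ 2 / S.g r ^ 2) * (‖E‖ / S.g r) * ‖u‖ ^ 2 ∧
      (0 < S.sigmaSq r u →
        |√(ρt * ⟪(S.toCLM + E) w, w⟫) / √(S.sigmaSq r u) - 1| ≤
          507 * (S.sigmaSq r u)⁻¹ * (‖S.toCLM‖ ^ 2 / S.g r ^ 2) * (‖E‖ / S.g r) *
            ‖u‖ ^ 2) := by
  have hg : 0 < S.g r := by linarith [hρt.1, hρt.2]
  have hρ : |ρt - S.μ r| ≤ S.g r / 2 :=
    abs_le.2 ⟨by linarith [hρt.1], by linarith [hρt.2]⟩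
  have hbound : |ρt * ⟪(S.toCLM + E) w, w⟫ - S.sigmaSq r u| ≤
      507 * (‖S.toCLM‖ ^ 2 / S.g r ^ 2) * (‖E‖ / S.g r) * ‖u‖ ^ 2 := by
    rw [S.sigmaSq_eq_mul_inner]
    exact IsPerturbedEigenpair.abs_mul_inner_sub_mul_inner_le ⟨hθt, heig, hρ, hE⟩
      (hθ.isIsolatedEigenpair hg) (hθ.isReducedResolvent hg u)
      ⟨(real_inner_comm w θt).trans horth, hw⟩ hθ.abs_μ_le_norm hθ.g_le_two_mul_norm
  refine ⟨hbound, fun hσ => ?_⟩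
  calc |√(ρt * ⟪(S.toCLM + E) w, w⟫) / √(S.sigmaSq r u) - 1|
      ≤ (S.sigmaSq r u)⁻¹ * |ρt * ⟪(S.toCLM + E) w, w⟫ - S.sigmaSq r u| :=
        abs_sqrt_div_sqrt_sub_one_le _ hσ
    _ ≤ (S.sigmaSq r u)⁻¹ *
          (507 * (‖S.toCLM‖ ^ 2 / S.g r ^ 2) * (‖E‖ / S.g r) * ‖u‖ ^ 2) := by gcongr
    _ = 507 * (S.sigmaSq r u)⁻¹ * (‖S.toCLM‖ ^ 2 / S.g r ^ 2) * (‖E‖ / S.g r) * ‖u‖ ^ 2 := by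
        ring

/-- **Lemma 5.3 (perturbation of `σ_r²`).** If `Σ̃ = Σ + E` with `E` self-adjoint,
`‖E‖ ≤ g_r/4`, and `(ρ̃, θ̃)` is the (unique) eigenpair of `Σ̃` near `μ_r` and
`w = C_r(Σ̃)u` (characterized by `⟪w, θ̃⟫ = 0` and `(ρ̃ - Σ̃)w = u - ⟪θ̃, u⟫θ̃`,
so that `σ_r²(Σ̃; u) = ρ̃⟨Σ̃w, w⟩`), then
`|σ_r²(Σ̃;u) - σ_r²(Σ;u)| ≲ (‖Σ‖²/g_r²)(‖E‖/g_r)‖u‖²` and, if `σ_r(Σ;u) > 0`,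
`|σ_r(Σ̃;u)/σ_r(Σ;u) - 1| ≲ σ_r⁻²(Σ;u)(‖Σ‖²/g_r²)(‖E‖/g_r)‖u‖²`. -/
theorem stmt18 :
    ∃ C : ℝ, 0 < C ∧ ∃ C' : ℝ, 0 < C' ∧
      ∀ (H : Type) (_ : NormedAddCommGroup H),
        ∀ (_ : InnerProductSpace ℝ H) (_ : CompleteSpace H)
          (S : CovOp H) (r : ℕ) (θ : H) (E : H →L[ℝ] H) (u θt w : H) (ρt : ℝ),
          S.SimpleVec r θ →
          (∀ x y : H, ⟪E x, y⟫ = ⟪x, E y⟫) →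
          ‖E‖ ≤ S.g r / 4 →
          ‖θt‖ = 1 →
          (S.toCLM + E) θt = ρt • θt →
          ρt ∈ Ioo (S.μ r - S.g r / 2) (S.μ r + S.g r / 2) →
          ⟪w, θt⟫ = 0 →
          ρt • w - (S.toCLM + E) w = u - ⟪θt, u⟫ • θt →
          |ρt * ⟪(S.toCLM + E) w, w⟫ - S.sigmaSq r u| ≤
              C * (‖S.toCLM‖ ^ 2 / S.g r ^ 2) * (‖E‖ / S.g r) * ‖u‖ ^ 2 ∧
            (0 < S.sigmaSq r u →
              |Real.sqrt (ρt * ⟪(S.toCLM + E) w, w⟫) / Real.sqrt (S.sigmaSq r u) - 1| ≤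
                C' * (S.sigmaSq r u)⁻¹ * (‖S.toCLM‖ ^ 2 / S.g r ^ 2) * (‖E‖ / S.g r) *
                  ‖u‖ ^ 2) := by
  exact ⟨507, by norm_num, 507, by norm_num,
    fun _ _ _ _ _ _ _ _ _ _ _ _ hθ _ hE hθt heig hρt horth hw =>
      stmt18_general hθ hE hθt heig hρt horth hw⟩

end KLN
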